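/- (Commutativity) Let φ be a CTL formula and V_1, V_2 ⊆ 𝒜. If ψ_1 is a result of forgetting V_1 from φ, ψ_2 is a result of forgetting V_2 from ψ_1, and ψ is a result of forgetting V_1 ∪ V_2 from φ, then ψ ≡ ψ_2. -/

import Mathlib

universe u

/-- A Kripke structure over a set of atoms: a finite nonempty set of states,
a serial transition relation, and a labeling function. -/
structure Kripke (Atom : Type u) where
  State : Type u
  stateFinite : Finite State
  stateNonempty : Nonempty State
  R : State → State → Prop
  serial : ∀ s, ∃ t, R s t
  L : State → Set Atom

instance {Atom : Type u} (M : Kripke Atom) : Finite M.State := M.stateFinite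

/-- A K-structure: a Kripke structure together with one of its states. -/
structure KStruct (Atom : Type u) where
  M : Kripke Atom
  s : M.State

/-- An initial structure: a Kripke structure with an initial state `s0`,
i.e. a state admitting a path visiting every state. -/
structure InitKripke (Atom : Type u) extends Kripke Atom where
  s0 : State
  initial : ∃ π : ℕ → State, π 0 = s0 ∧ (∀ n, R (π n) (π (n + 1))) ∧ ∀ t, ∃ n, π n = t

/-- The (initial) K-structure associated to an initial structure. -/
def InitKripke.toKS {Atom : Type u} (M : InitKripke Atom) : KStruct Atom :=
  ⟨M.toKripke, M.s0⟩

/-- The approximations `B_n^V` of `V`-bisimilarity on K-structures. -/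
def BRel {Atom : Type u} (V : Set Atom) : ℕ → KStruct Atom → KStruct Atom → Prop
  | 0 => fun K1 K2 => K1.M.L K1.s \ V = K2.M.L K2.s \ V
  | n + 1 => fun K1 K2 =>
      K1.M.L K1.s \ V = K2.M.L K2.s \ V ∧
      (∀ t1, K1.M.R K1.s t1 → ∃ t2, K2.M.R K2.s t2 ∧ BRel V n ⟨K1.M, t1⟩ ⟨K2.M, t2⟩) ∧
      (∀ t2, K2.M.R K2.s t2 → ∃ t1, K1.M.R K1.s t1 ∧ BRel V n ⟨K1.M, t1⟩ ⟨K2.M, t2⟩)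

/-- `V`-bisimilarity `K1 ↔_V K2` of K-structures. -/
def VBisim {Atom : Type u} (V : Set Atom) (K1 K2 : KStruct Atom) : Prop :=
  ∀ n, BRel V n K1 K2

/-- CTL formulas in existential normal form. -/
inductive CTL (Atom : Type u) : Type u
  | bot  : CTL Atom
  | top  : CTL Atom
  | atom (p : Atom) : CTL Atom
  | neg  (φ : CTL Atom) : CTL Atom
  | or   (φ ψ : CTL Atom) : CTL Atom
  | EX   (φ : CTL Atom) : CTL Atom
  | EG   (φ : CTL Atom) : CTL Atom
  | EU   (φ ψ : CTL Atom) : CTL Atom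

namespace CTL
variable {Atom : Type u}

def and (φ ψ : CTL Atom) : CTL Atom := .neg (.or (.neg φ) (.neg ψ))
def imp (φ ψ : CTL Atom) : CTL Atom := .or (.neg φ) ψ
def iff (φ ψ : CTL Atom) : CTL Atom := (φ.imp ψ).and (ψ.imp φ)
def AX (φ : CTL Atom) : CTL Atom := .neg (.EX (.neg φ))
def EF (φ : CTL Atom) : CTL Atom := .EU .top φ
def AF (φ : CTL Atom) : CTL Atom := .neg (.EG (.neg φ))
def AG (φ : CTL Atom) : CTL Atom := .neg (.EU .top (.neg φ))

/-- The set of atoms occurring in a formula. -/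
def vars : CTL Atom → Set Atom
  | .bot => ∅
  | .top => ∅
  | .atom p => {p}
  | .neg φ => vars φ
  | .or φ ψ => vars φ ∪ vars ψ
  | .EX φ => vars φ
  | .EG φ => vars φ
  | .EU φ ψ => vars φ ∪ vars ψ

end CTL

/-- The standard CTL satisfaction relation `(M,s) ⊨ φ`. -/
def Sat {Atom : Type u} (M : Kripke Atom) : CTL Atom → M.State → Prop
  | .bot => fun _ => False
  | .top => fun _ => True
  | .atom p => fun s => p ∈ M.L s
  | .neg φ => fun s => ¬ Sat M φ s
  | .or φ ψ => fun s => Sat M φ s ∨ Sat M ψ s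
  | .EX φ => fun s => ∃ t, M.R s t ∧ Sat M φ t
  | .EG φ => fun s => ∃ π : ℕ → M.State, π 0 = s ∧ (∀ n, M.R (π n) (π (n + 1))) ∧
      ∀ n, Sat M φ (π n)
  | .EU φ ψ => fun s => ∃ π : ℕ → M.State, π 0 = s ∧ (∀ n, M.R (π n) (π (n + 1))) ∧
      ∃ i, Sat M ψ (π i) ∧ ∀ j < i, Sat M φ (π j)

/-- Satisfaction for K-structures. -/
def KSat {Atom : Type u} (K : KStruct Atom) (φ : CTL Atom) : Prop := Sat K.M φ K.s

/-- The set of models (initial K-structures) of a formula. -/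
def CTLMod {Atom : Type u} (φ : CTL Atom) : Set (InitKripke Atom) :=
  {M | Sat M.toKripke φ M.s0}

def Entails {Atom : Type u} (φ ψ : CTL Atom) : Prop := CTLMod φ ⊆ CTLMod ψ

def CTLEquiv {Atom : Type u} (φ ψ : CTL Atom) : Prop := CTLMod φ = CTLMod ψ

/-- `IR φ V`: φ is irrelevant to the atoms in V. -/
def IR {Atom : Type u} (φ : CTL Atom) (V : Set Atom) : Prop :=
  ∃ ψ : CTL Atom, CTL.vars ψ ∩ V = ∅ ∧ CTLEquiv φ ψ

/-- `V`-bisimilarity of depth-`n` computation trees rooted at `s1` (in `M1`) and `s2` (in `M2`). -/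
def TreeBisim {Atom : Type u} (V : Set Atom) (M1 M2 : Kripke Atom) :
    ℕ → M1.State → M2.State → Prop
  | 0 => fun s1 s2 => M1.L s1 \ V = M2.L s2 \ V
  | n + 1 => fun s1 s2 =>
      M1.L s1 \ V = M2.L s2 \ V ∧
      (∀ t1, M1.R s1 t1 → ∃ t2, M2.R s2 t2 ∧ TreeBisim V M1 M2 n t1 t2) ∧
      (∀ t2, M2.R s2 t2 → ∃ t1, M1.R s1 t1 ∧ TreeBisim V M1 M2 n t1 t2)

/-- Finite conjunction of a list of formulas. -/
def andList {Atom : Type u} : List (CTL Atom) → CTL Atom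
  | [] => .top
  | φ :: l => φ.and (andList l)

/-- Finite disjunction of a list of formulas. -/
def orList {Atom : Type u} : List (CTL Atom) → CTL Atom
  | [] => .bot
  | φ :: l => .or φ (orList l)

/-- A list enumerating a subset of a finite type. -/
noncomputable def setToList {α : Type u} [Finite α] (s : Set α) : List α :=
  s.toFinite.toFinset.toList

/-- The list of `R`-successors of a state. -/
noncomputable def Kripke.succList {Atom : Type u} (M : Kripke Atom) (s : M.State) :
    List M.State :=
  setToList {t | M.R s t}

/-- The characterizing formula `F_V(Tr_0(s))` of the depth-0 computation tree. -/
noncomputable def charTree0 {Atom : Type u} [Finite Atom] (M : Kripke Atom) (V : Set Atom)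
    (s : M.State) : CTL Atom :=
  (andList ((setToList (V ∩ M.L s)).map CTL.atom)).and
    (andList ((setToList (V \ M.L s)).map fun q => CTL.neg (CTL.atom q)))

/-- The characterizing formula `F_V(Tr_n(s))` of the depth-`n` computation tree of `s`. -/
noncomputable def charTree {Atom : Type u} [Finite Atom] (M : Kripke Atom) (V : Set Atom) :
    ℕ → M.State → CTL Atom
  | 0 => fun s => charTree0 M V s
  | k + 1 => fun s =>
      (andList ((M.succList s).map fun t => CTL.EX (charTree M V k t))).and
        ((CTL.AX (orList ((M.succList s).map (charTree M V k)))).and (charTree0 M V s))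

/-- `dis_V(M,s,s',k)`: `s` and `s'` are `V`-distinguishable, and `k` is the least depth at which
their computation trees fail to be `(𝒜∖V)`-bisimilar. -/
def dis {Atom : Type u} (M : Kripke Atom) (V : Set Atom) (s s' : M.State) (k : ℕ) : Prop :=
  ¬ VBisim Vᶜ ⟨M, s⟩ ⟨M, s'⟩ ∧
  IsLeast {n | ¬ TreeBisim Vᶜ M M n s s'} k

/-- The characterization number `ch(M,V)`. -/
noncomputable def ch {Atom : Type u} (M : Kripke Atom) (V : Set Atom) : ℕ :=
  letI := Classical.dec (∃ s s' k, dis M V s s' k)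
  if ∃ s s' k, dis M V s s' k then
    sSup {k | ∃ s s', dis M V s s' k}
  else
    sInf {k | (fun s s' : M.State => BRel Vᶜ k ⟨M, s⟩ ⟨M, s'⟩) =
              (fun s s' : M.State => BRel Vᶜ (k + 1) ⟨M, s⟩ ⟨M, s'⟩)}

/-- The characterizing formula `F_V(M,s0)` of an initial K-structure on `V`. -/
noncomputable def charForm {Atom : Type u} [Finite Atom] (M : InitKripke Atom) (V : Set Atom) :
    CTL Atom :=
  let T : M.State → CTL Atom := fun s => charTree M.toKripke V (ch M.toKripke V) s
  (T M.s0).and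
    (andList ((setToList (Set.univ : Set M.State)).map fun s =>
      CTL.AG ((T s).imp
        ((andList ((M.toKripke.succList s).map fun t => CTL.EX (T t))).and
          (CTL.AX (orList ((M.toKripke.succList s).map T)))))))

/-- `ψ` is a result of forgetting `V` from `φ`. -/
def IsForget {Atom : Type u} (φ : CTL Atom) (V : Set Atom) (ψ : CTL Atom) : Prop :=
  CTL.vars ψ ∩ V = ∅ ∧
  CTLMod ψ = {K : InitKripke Atom | ∃ K' ∈ CTLMod φ, VBisim V K'.toKS K.toKS}

/-!
Composing the two forgetting steps always lands inside the models of `ψ` (bisimilarities compose);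
the substance is the converse. Let `T ⊨ φ` and let `K` be `(V1 ∪ V2)`-bisimilar to `T`: we want
`K ⊨ ψ2`, hence some structure that is `V1`-bisimilar to `T` and `V2`-bisimilar to `K`. An amalgam
of `T` and `K` has these bisimilarities but may fail to be initial. Suppose `q ∈ V1 \ V2` (if there
is no such `q`, then `V1 ∪ V2 = V2` and `K` is already reached from `T`). Unfold `T` and `K` to
`V1`-bisimilar initial structures `T₁` and `K₁` in which long chains (probes) branch off; their
`q`-labels reveal from which state they were entered, but lie too deep for `ψ2` to see.
* Up to that depth `T₁` and `K₁` agree outside `V2`; since `T₁ ⊨ ψ2`, also `K₁ ⊨ ψ2`, which yields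
  an initial `K₂ ⊨ ψ1` that is `V2`-bisimilar to `K₁`.
* The probes make `K₁` rigid: `V2`-bisimilar states of `K₁` are copies of the same state of `K`.
  Each state of `K₂` therefore determines a state of `K`, and copying the `V1`-atoms from there
  relabels `K₂` to a structure that is `V1`-bisimilar to `K₂`, hence still a model of `ψ1`, and
  `V2`-bisimilar to `K`.
-/

open Relation

theorem sdiff_eq_sdiff_of_subset {α : Type*} {V W s t : Set α} (hVW : V ⊆ W)
    (h : s \ V = t \ V) : s \ W = t \ W := by
  rw [← Set.union_eq_self_of_subset_left hVW, ← Set.sdiff_sdiff, h, Set.sdiff_sdiff]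

theorem exists_mod_eq_of_le {P a : ℕ} (hP : 0 < P) (ha : P ≤ a + 1) (b : ℕ) :
    ∃ b' ≤ a, a < b' + P ∧ b' % P = b % P := by
  have hb := b.mod_lt hP
  have hdiv := Nat.div_add_mod (a - b % P) P
  have hmod := (a - b % P).mod_lt hP
  exact ⟨b % P + P * ((a - b % P) / P), by omega, by omega, by
    rw [Nat.add_mul_mod_self_left, Nat.mod_mod]⟩

section Bisimulation

variable {Atom : Type u} {V W : Set Atom} {K₁ K₂ K₃ : KStruct Atom} {M N : Kripke Atom}

namespace BRel

theorem label_eq {n : ℕ} (h : BRel V n K₁ K₂) : K₁.M.L K₁.s \ V = K₂.M.L K₂.s \ V := by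
  cases n with
  | zero => exact h
  | succ n => exact h.1

theorem of_succ {n : ℕ} (h : BRel V (n + 1) K₁ K₂) : BRel V n K₁ K₂ := by
  induction n generalizing K₁ K₂ with
  | zero => exact h.1
  | succ n ih =>
    exact ⟨h.1, fun t ht ↦ (h.2.1 t ht).imp fun _ ↦ And.imp_right ih,
      fun t ht ↦ (h.2.2 t ht).imp fun _ ↦ And.imp_right ih⟩

theorem of_le {m n : ℕ} (hmn : m ≤ n) (h : BRel V n K₁ K₂) : BRel V m K₁ K₂ := by
  induction hmn with
  | refl => exact h
  | step _ ih => exact ih h.of_succ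

theorem symm {n : ℕ} (h : BRel V n K₁ K₂) : BRel V n K₂ K₁ := by
  induction n generalizing K₁ K₂ with
  | zero => exact Eq.symm h
  | succ n ih =>
    exact ⟨h.1.symm, fun t ht ↦ (h.2.2 t ht).imp fun _ ↦ And.imp_right ih,
      fun t ht ↦ (h.2.1 t ht).imp fun _ ↦ And.imp_right ih⟩

theorem trans {n : ℕ} (h : BRel V n K₁ K₂) (h' : BRel V n K₂ K₃) : BRel V n K₁ K₃ := by
  induction n generalizing K₁ K₂ K₃ with
  | zero => exact Eq.trans h h'
  | succ n ih =>
    refine ⟨h.1.trans h'.1, fun t₁ ht₁ ↦ ?_, fun t₃ ht₃ ↦ ?_⟩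
    · obtain ⟨t₂, ht₂, h₁₂⟩ := h.2.1 t₁ ht₁
      obtain ⟨t₃, ht₃, h₂₃⟩ := h'.2.1 t₂ ht₂
      exact ⟨t₃, ht₃, ih h₁₂ h₂₃⟩
    · obtain ⟨t₂, ht₂, h₂₃⟩ := h'.2.2 t₃ ht₃
      obtain ⟨t₁, ht₁, h₁₂⟩ := h.2.2 t₂ ht₂
      exact ⟨t₁, ht₁, ih h₁₂ h₂₃⟩

theorem mono (hVW : V ⊆ W) {n : ℕ} (h : BRel V n K₁ K₂) : BRel W n K₁ K₂ := by
  induction n generalizing K₁ K₂ with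
  | zero => exact sdiff_eq_sdiff_of_subset hVW h
  | succ n ih =>
    exact ⟨sdiff_eq_sdiff_of_subset hVW h.1,
      fun t ht ↦ (h.2.1 t ht).imp fun _ ↦ And.imp_right ih,
      fun t ht ↦ (h.2.2 t ht).imp fun _ ↦ And.imp_right ih⟩

end BRel

namespace VBisim

theorem symm (h : VBisim V K₁ K₂) : VBisim V K₂ K₁ := fun n ↦ (h n).symm

theorem trans (h : VBisim V K₁ K₂) (h' : VBisim V K₂ K₃) : VBisim V K₁ K₃ :=
  fun n ↦ (h n).trans (h' n)

theorem mono (hVW : V ⊆ W) (h : VBisim V K₁ K₂) : VBisim W K₁ K₂ := fun n ↦ (h n).mono hVW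

theorem label_eq {s : M.State} {t : N.State} (h : VBisim V ⟨M, s⟩ ⟨N, t⟩) :
    M.L s \ V = N.L t \ V :=
  (h 0).label_eq

theorem of_bisimulation (Z : M.State → N.State → Prop)
    (label : ∀ {s t}, Z s t → M.L s \ V = N.L t \ V)
    (forth : ∀ {s t s'}, Z s t → M.R s s' → ∃ t', N.R t t' ∧ Z s' t')
    (back : ∀ {s t t'}, Z s t → N.R t t' → ∃ s', M.R s s' ∧ Z s' t')
    {s : M.State} {t : N.State} (h : Z s t) : VBisim V ⟨M, s⟩ ⟨N, t⟩ := by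
  intro n
  induction n generalizing s t with
  | zero => exact label h
  | succ n ih =>
    exact ⟨label h, fun s' hs ↦ (forth h hs).imp fun _ ↦ And.imp_right ih,
      fun t' ht ↦ (back h ht).imp fun _ ↦ And.imp_right ih⟩

theorem refl (V : Set Atom) (K : KStruct Atom) : VBisim V K K :=
  of_bisimulation (M := K.M) (N := K.M) Eq (fun h ↦ by rw [h]) (fun h hs ↦ ⟨_, h ▸ hs, rfl⟩)
    (fun h ht ↦ ⟨_, h ▸ ht, rfl⟩) rfl

/- The successor of `t` matching `s'` up to `BRel V n` may depend on `n`; since `t` has finitely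
many successors, one of them serves infinitely many `n`. -/
theorem exists_succ {s s' : M.State} {t : N.State} (h : VBisim V ⟨M, s⟩ ⟨N, t⟩) (hs : M.R s s') :
    ∃ t', N.R t t' ∧ VBisim V ⟨M, s'⟩ ⟨N, t'⟩ := by
  choose f hR hf using fun n ↦ (h (n + 1)).2.1 s' hs
  obtain ⟨t', ht'⟩ := Finite.exists_infinite_fiber f
  rw [Set.infinite_coe_iff] at ht'
  obtain ⟨m, rfl⟩ := ht'.nonempty
  refine ⟨f m, hR m, fun n ↦ ?_⟩
  obtain ⟨i, hi, hni⟩ := ht'.exists_gt n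
  have hi : f i = f m := hi
  exact hi ▸ (hf i).of_le hni.le

end VBisim

/-- The `V`-bisimilarity class of a K-structure. Equality of classes lets `V`-bisimilarity between
states of different structures be handled by rewriting. -/
def bisimClass (V : Set Atom) (K : KStruct Atom) : Set (KStruct Atom) := {K' | VBisim V K K'}

theorem bisimClass_eq_iff : bisimClass V K₁ = bisimClass V K₂ ↔ VBisim V K₁ K₂ :=
  ⟨fun h ↦ h.symm.subset (VBisim.refl V K₂), fun h ↦ Set.ext fun _ ↦ ⟨h.symm.trans, h.trans⟩⟩

theorem exists_succ_bisimClass_eq {s s' : M.State} {t : N.State}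
    (h : bisimClass V ⟨M, s⟩ = bisimClass V ⟨N, t⟩) (hs : M.R s s') :
    ∃ t', N.R t t' ∧ bisimClass V ⟨M, s'⟩ = bisimClass V ⟨N, t'⟩ := by
  simpa only [bisimClass_eq_iff] using (bisimClass_eq_iff.1 h).exists_succ hs

/-- A bounded morphism (p-morphism) of Kripke structures that preserves the atoms outside `V`: a
function whose graph is a `V`-bisimulation. -/
structure IsBoundedMorphism (V : Set Atom) (M N : Kripke Atom) (f : M.State → N.State) :
    Prop where
  label_eq : ∀ s, M.L s \ V = N.L (f s) \ V
  map_rel : ∀ {s t}, M.R s t → N.R (f s) (f t)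
  exists_lift : ∀ {s k}, N.R (f s) k → ∃ t, M.R s t ∧ f t = k

theorem IsBoundedMorphism.vbisim {f : M.State → N.State} (h : IsBoundedMorphism V M N f)
    (s : M.State) : VBisim V ⟨M, s⟩ ⟨N, f s⟩ := by
  refine VBisim.of_bisimulation (fun s k ↦ f s = k) ?_ ?_ ?_ rfl
  · rintro s _ rfl
    exact h.label_eq s
  · rintro s _ s' rfl hs
    exact ⟨f s', h.map_rel hs, rfl⟩
  · rintro s _ k rfl hk
    exact h.exists_lift hk

end Bisimulation

section Paths

variable {S T : Type*} {R : S → S → Prop}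

theorem exists_path_of_forall_mem {A : Set S} (hA : ∀ s ∈ A, ∃ t ∈ A, R s t) {s : S} (hs : s ∈ A) :
    ∃ π : ℕ → S, π 0 = s ∧ ∀ n, R (π n) (π (n + 1)) := by
  choose f hf hR using fun s : A ↦ hA s s.2
  let g : A → A := fun s ↦ ⟨f s, hf s⟩
  refine ⟨fun n ↦ g^[n] ⟨s, hs⟩, rfl, fun n ↦ ?_⟩
  simpa only [Function.iterate_succ_apply'] using hR _

theorem reflTransGen_of_path {π : ℕ → S} (hπ : ∀ n, R (π n) (π (n + 1))) {m n : ℕ} (hmn : m ≤ n) :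
    ReflTransGen R (π m) (π n) :=
  (reflTransGen_of_succ_of_le (fun i j ↦ R (π i) (π j)) (fun i _ ↦ hπ i) hmn).lift π fun _ _ ↦ id

theorem exists_walk_of_reflTransGen {x y : S} (h : ReflTransGen R x y) :
    ∃ (n : ℕ) (v : ℕ → S), v 0 = x ∧ v n = y ∧ ∀ i < n, R (v i) (v (i + 1)) := by
  induction h using ReflTransGen.head_induction_on with
  | refl => exact ⟨0, fun _ ↦ y, rfl, rfl, fun i hi ↦ absurd hi i.not_lt_zero⟩
  | @head a c hac _ ih =>
    obtain ⟨n, v, rfl, hn, hv⟩ := ih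
    refine ⟨n + 1, fun i ↦ i.casesOn a v, rfl, hn, fun i hi ↦ ?_⟩
    cases i with
    | zero => exact hac
    | succ i => exact hv i (Nat.lt_of_succ_lt_succ hi)

theorem exists_path_append {R' : S → S → Prop} (hle : ∀ x y, R' x y → R x y) {s : S} {π : ℕ → S}
    (h : ReflTransGen R' s (π 0)) (hπ : ∀ n, R (π n) (π (n + 1))) :
    ∃ (m : ℕ) (π' : ℕ → S), π' 0 = s ∧ (∀ n, R (π' n) (π' (n + 1))) ∧ (∀ n, π' (m + n) = π n) ∧
      ∀ i < m, R' (π' i) (π' (i + 1)) := by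
  induction h using ReflTransGen.head_induction_on with
  | refl => exact ⟨0, π, rfl, hπ, fun n ↦ by rw [zero_add], fun i hi ↦ absurd hi i.not_lt_zero⟩
  | @head a c hac _ ih =>
    obtain ⟨m, π', rfl, hR, htail, hR'⟩ := ih
    refine ⟨m + 1, fun i ↦ i.casesOn a π', rfl, fun i ↦ ?_, fun n ↦ ?_, fun i hi ↦ ?_⟩
    · cases i with
      | zero => exact hle _ _ hac
      | succ i => exact hR i
    · rw [Nat.succ_add]
      exact htail n
    · cases i with
      | zero => exact hac
      | succ i => exact hR' i (Nat.lt_of_succ_lt_succ hi)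

theorem exists_forall_reflTransGen (htot : ∀ x y, ReflTransGen R x y ∨ ReflTransGen R y x)
    {F : Finset S} (hF : F.Nonempty) : ∃ y ∈ F, ∀ z ∈ F, ReflTransGen R y z := by
  induction hF using Finset.Nonempty.cons_induction with
  | singleton a => exact ⟨a, by simp, by simp [ReflTransGen.refl]⟩
  | cons a F ha _ ih =>
    obtain ⟨y, hy, hyF⟩ := ih
    rcases htot y a with hya | hay
    · exact ⟨y, Finset.mem_cons_of_mem hy, (Finset.forall_mem_cons ha _).2 ⟨hya, hyF⟩⟩
    · exact ⟨a, Finset.mem_cons_self a F,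
        (Finset.forall_mem_cons ha _).2 ⟨.refl, fun z hz ↦ hay.trans (hyF z hz)⟩⟩

theorem exists_path_through_finset (hser : ∀ s, ∃ t, R s t)
    (htot : ∀ x y, ReflTransGen R x y ∨ ReflTransGen R y x) (F : Finset S) {s : S}
    (hs : ∀ x ∈ F, ReflTransGen R s x) :
    ∃ π : ℕ → S, π 0 = s ∧ (∀ n, R (π n) (π (n + 1))) ∧ ∀ t ∈ F, ∃ n, π n = t := by
  classical
  induction F using Finset.strongInduction generalizing s with
  | H F ih =>
    obtain rfl | hF := F.eq_empty_or_nonempty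
    · obtain ⟨π, h0, hπ⟩ := exists_path_of_forall_mem (A := Set.univ) (R := R) (by simpa using hser)
        (Set.mem_univ s)
      exact ⟨π, h0, hπ, by simp⟩
    · obtain ⟨y, hy, hyF⟩ := exists_forall_reflTransGen htot hF
      obtain ⟨π, rfl, hπ, hcover⟩ := ih (F.erase y) (Finset.erase_ssubset hy) fun z hz ↦
        hyF z (Finset.mem_of_mem_erase hz)
      obtain ⟨m, π', h0, hπ', htail, -⟩ := exists_path_append (fun _ _ ↦ id) (hs _ hy) hπ
      refine ⟨π', h0, hπ', fun t ht ↦ ?_⟩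
      obtain rfl | hty := eq_or_ne t (π 0)
      · exact ⟨m + 0, htail 0⟩
      · obtain ⟨n, rfl⟩ := hcover t (Finset.mem_erase.2 ⟨hty, ht⟩)
        exact ⟨m + n, htail n⟩

theorem exists_surjective_path [Finite S] (hser : ∀ s, ∃ t, R s t)
    (htot : ∀ x y, ReflTransGen R x y ∨ ReflTransGen R y x) {s : S}
    (hs : ∀ x, ReflTransGen R s x) :
    ∃ π : ℕ → S, π 0 = s ∧ (∀ n, R (π n) (π (n + 1))) ∧ ∀ t, ∃ n, π n = t := by
  have := Fintype.ofFinite S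
  simpa using exists_path_through_finset hser htot Finset.univ fun x _ ↦ hs x

theorem exists_transGen_self [Finite S] {X : Set S} (hX : X.Nonempty)
    (h : ∀ x ∈ X, ∃ y ∈ X, TransGen R x y) : ∃ x ∈ X, TransGen R x x := by
  by_contra! hirr
  let r : X → X → Prop := fun x y ↦ TransGen R y x
  have : IsTrans X r := ⟨fun _ _ _ hxy hyz ↦ hyz.trans hxy⟩
  have : Std.Irrefl r := ⟨fun x ↦ hirr x x.2⟩
  obtain ⟨x, -, hx⟩ := (Finite.wellFounded_of_trans_of_irrefl r).has_min Set.univ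
    ⟨⟨_, hX.some_mem⟩, trivial⟩
  obtain ⟨y, hy, hxy⟩ := h x x.2
  exact hx ⟨y, hy⟩ trivial hxy

theorem exists_lt_map_eq_of_card_le [Finite S] {n : ℕ} (hn : Nat.card S ≤ n) (f : ℕ → S) :
    ∃ i j, i < j ∧ j ≤ n ∧ f i = f j := by
  obtain ⟨i, j, hf, hij⟩ : ∃ i j : Fin (n + 1), f i = f j ∧ i ≠ j := by
    by_contra! hinj
    have := Nat.card_le_card_of_injective (fun i : Fin (n + 1) ↦ f i) hinj
    rw [Nat.card_fin] at this
    omega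
  obtain hij | hij := hij.lt_or_gt
  · exact ⟨i, j, hij, j.is_le, hf⟩
  · exact ⟨j, i, hij, i.is_le, hf.symm⟩

theorem rel_mod_of_closed_walk {n : ℕ} (hn : 0 < n) {v : ℕ → S} (hclosed : v n = v 0)
    (hv : ∀ i < n, R (v i) (v (i + 1))) (i : ℕ) : R (v (i % n)) (v ((i + 1) % n)) := by
  rw [← Nat.mod_add_mod]
  have hstep := hv _ (i.mod_lt hn)
  obtain hi | hi : i % n + 1 < n ∨ i % n + 1 = n := (Nat.succ_le_of_lt (i.mod_lt hn)).lt_or_eq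
  · rwa [Nat.mod_eq_of_lt hi]
  · rw [hi] at hstep
    rwa [hi, Nat.mod_self, ← hclosed]

theorem exists_periodic_path {x : S} (h : TransGen R x x) :
    ∃ (P : ℕ) (v : ℕ → S), 0 < P ∧ v 0 = x ∧ (∀ n, R (v n) (v (n + 1))) ∧
      Function.Periodic v P := by
  obtain ⟨y, hxy, hyx⟩ := TransGen.head'_iff.1 h
  obtain ⟨n, v, rfl, hn, hv⟩ := exists_walk_of_reflTransGen hyx
  let u : ℕ → S := fun i ↦ i.casesOn x v
  refine ⟨n + 1, fun i ↦ u (i % (n + 1)), n.succ_pos, rfl,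
    rel_mod_of_closed_walk n.succ_pos hn fun i hi ↦ ?_, fun i ↦ by simp only [Nat.add_mod_right]⟩
  cases i with
  | zero => exact hxy
  | succ i => exact hv i (Nat.lt_of_succ_lt_succ hi)

theorem exists_common_period [Finite S] (R : S → S → Prop) :
    ∃ P, 0 < P ∧ ∀ x, TransGen R x x →
      ∃ v : ℕ → S, v 0 = x ∧ (∀ n, R (v n) (v (n + 1))) ∧ Function.Periodic v P := by
  classical
  have := Fintype.ofFinite S
  have hper (x : S) : ∃ P, 0 < P ∧ (TransGen R x x →
      ∃ v : ℕ → S, v 0 = x ∧ (∀ n, R (v n) (v (n + 1))) ∧ Function.Periodic v P) := by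
    by_cases hx : TransGen R x x
    · obtain ⟨P, v, hP, hv⟩ := exists_periodic_path hx
      exact ⟨P, hP, fun _ ↦ ⟨v, hv⟩⟩
    · exact ⟨1, one_pos, fun h ↦ absurd h hx⟩
  choose P hP hv using hper
  refine ⟨∏ x, P x, Finset.prod_pos fun x _ ↦ hP x, fun x hx ↦ ?_⟩
  obtain ⟨v, h0, hstep, hper⟩ := hv x hx
  refine ⟨v, h0, hstep, ?_⟩
  rw [← Finset.prod_erase_mul _ _ (Finset.mem_univ x)]
  exact hper.nat_mul _

/-- The steps of `R` that leave a point of `A`; chains of such steps express the CTL modalities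
`EG` and `EU`. -/
def Guarded (A : S → Prop) (R : S → S → Prop) (x y : S) : Prop := A x ∧ R x y

/-- A simulation of `G` in `H` along `Z` that may answer one step by several. -/
def IsWeakSimulation (Z : S → T → Prop) (G : S → S → Prop) (H : T → T → Prop) : Prop :=
  ∀ ⦃x y x'⦄, Z x y → G x x' → ∃ y', TransGen H y y' ∧ Z x' y'

namespace IsWeakSimulation

variable {Z : S → T → Prop} {G : S → S → Prop} {H : T → T → Prop}

theorem exists_reflTransGen (hZ : IsWeakSimulation Z G H) {x x' : S} {y : T} (hxy : Z x y)
    (h : ReflTransGen G x x') : ∃ y', ReflTransGen H y y' ∧ Z x' y' := by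
  induction h with
  | refl => exact ⟨y, .refl, hxy⟩
  | tail _ hstep ih =>
    obtain ⟨z, hyz, hz⟩ := ih
    obtain ⟨y', hzy', hy'⟩ := hZ hz hstep
    exact ⟨y', hyz.trans hzy'.to_reflTransGen, hy'⟩

theorem exists_transGen (hZ : IsWeakSimulation Z G H) {x x' : S} {y : T} (hxy : Z x y)
    (h : TransGen G x x') : ∃ y', TransGen H y y' ∧ Z x' y' := by
  obtain ⟨z, hxz, hzx'⟩ := TransGen.tail'_iff.1 h
  obtain ⟨w, hyw, hw⟩ := hZ.exists_reflTransGen hxy hxz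
  obtain ⟨y', hwy', hy'⟩ := hZ hw hzx'
  exact ⟨y', TransGen.trans_right hyw hwy', hy'⟩

theorem exists_path (hZ : IsWeakSimulation Z G H) {π : ℕ → S} {y : T} (hy : Z (π 0) y)
    (hπ : ∀ n, G (π n) (π (n + 1))) :
    ∃ π' : ℕ → T, π' 0 = y ∧ ∀ n, H (π' n) (π' (n + 1)) := by
  refine exists_path_of_forall_mem (A := {z | ∃ n z', ReflTransGen H z z' ∧ Z (π n) z'}) ?_
    ⟨0, y, .refl, hy⟩
  rintro z ⟨n, z', hzz', hz'⟩
  obtain ⟨z'', hz'z'', hz''⟩ := hZ hz' (hπ n)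
  obtain ⟨w, hzw, hwz''⟩ := TransGen.head'_iff.1 (TransGen.trans_right hzz' hz'z'')
  exact ⟨w, ⟨n + 1, z'', hwz'', hz''⟩, hzw⟩

end IsWeakSimulation

end Paths

section Semantics

variable {Atom : Type u}

theorem Kripke.exists_path (M : Kripke Atom) (s : M.State) :
    ∃ π : ℕ → M.State, π 0 = s ∧ ∀ n, M.R (π n) (π (n + 1)) :=
  exists_path_of_forall_mem (A := Set.univ) (by simpa using M.serial) (Set.mem_univ s)

theorem InitKripke.reflTransGen_s0 (N : InitKripke Atom) (s : N.State) :
    ReflTransGen N.R N.s0 s := by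
  obtain ⟨π, h0, hπ, hcover⟩ := N.initial
  obtain ⟨n, rfl⟩ := hcover s
  exact h0 ▸ reflTransGen_of_path hπ n.zero_le

theorem InitKripke.reflTransGen_total (N : InitKripke Atom) (s t : N.State) :
    ReflTransGen N.R s t ∨ ReflTransGen N.R t s := by
  obtain ⟨π, -, hπ, hcover⟩ := N.initial
  obtain ⟨m, rfl⟩ := hcover s
  obtain ⟨n, rfl⟩ := hcover t
  exact (le_total m n).imp (reflTransGen_of_path hπ) (reflTransGen_of_path hπ)

theorem exists_path_bisimClass_eq {V : Set Atom} {M M' : Kripke Atom}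
    {π : ℕ → M.State} (hπ : ∀ n, M.R (π n) (π (n + 1))) {t : M'.State}
    (h : bisimClass V ⟨M, π 0⟩ = bisimClass V ⟨M', t⟩) :
    ∃ π' : ℕ → M'.State, π' 0 = t ∧ (∀ n, M'.R (π' n) (π' (n + 1))) ∧
      ∀ n, bisimClass V ⟨M, π n⟩ = bisimClass V ⟨M', π' n⟩ := by
  obtain ⟨σ, h0, hσ⟩ := exists_path_of_forall_mem
    (A := {a : ℕ × M'.State | bisimClass V ⟨M, π a.1⟩ = bisimClass V ⟨M', a.2⟩})
    (R := fun a b ↦ bisimClass V ⟨M, π a.1⟩ = bisimClass V ⟨M', a.2⟩ ∧ b.1 = a.1 + 1 ∧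
      M'.R a.2 b.2)
    (by
      rintro ⟨n, s⟩ hs
      obtain ⟨s', hss', hs'⟩ := exists_succ_bisimClass_eq hs (hπ n)
      exact ⟨(n + 1, s'), hs', hs, rfl, hss'⟩)
    (s := (0, t)) h
  have hfst (n : ℕ) : (σ n).1 = n := by
    induction n with
    | zero => rw [h0]
    | succ n ih => rw [(hσ n).2.1, ih]
  exact ⟨fun n ↦ (σ n).2, congrArg Prod.snd h0, fun n ↦ (hσ n).2.2,
    fun n ↦ by simpa only [hfst] using (hσ n).1⟩

/-- The nesting depth of the temporal operators of a formula. -/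
def CTL.depth : CTL Atom → ℕ
  | .bot => 0
  | .top => 0
  | .atom _ => 0
  | .neg φ => φ.depth
  | .or φ ψ => max φ.depth ψ.depth
  | .EX φ => φ.depth + 1
  | .EG φ => φ.depth + 1
  | .EU φ ψ => max φ.depth ψ.depth + 1

theorem sat_EG_iff {M : Kripke Atom} {φ : CTL Atom} {s : M.State} :
    Sat M (.EG φ) s ↔
      ∃ π : ℕ → M.State, π 0 = s ∧ ∀ n, Guarded (Sat M φ) M.R (π n) (π (n + 1)) := by
  simp only [Sat, Guarded, forall_and, and_comm]

theorem sat_EU_iff {M : Kripke Atom} {φ ψ : CTL Atom} {s : M.State} :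
    Sat M (.EU φ ψ) s ↔ ∃ t, Sat M ψ t ∧ ReflTransGen (Guarded (Sat M φ) M.R) s t := by
  constructor
  · rintro ⟨π, rfl, hπ, i, hψ, hφ⟩
    refine ⟨π i, hψ, ?_⟩
    exact (reflTransGen_of_succ_of_le (fun m n ↦ Guarded (Sat M φ) M.R (π m) (π n))
      (fun j hj ↦ ⟨hφ j hj.2, hπ j⟩) i.zero_le).lift π fun _ _ ↦ id
  · rintro ⟨t, hψ, hst⟩
    obtain ⟨π, rfl, hπ⟩ := M.exists_path t
    obtain ⟨m, π', h0, hπ', htail, hφ⟩ := exists_path_append (fun _ _ ↦ And.right) hst hπ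
    exact ⟨π', h0, hπ', m, (htail 0).symm ▸ hψ, fun j hj ↦ (hφ j hj).1⟩

end Semantics

/-- The parameters of the unfolding construction: the sets `V1` and `V2` to be forgotten, an atom
`q` used to mark the unfolding, a bound `size` on the number of states of the structures to
be unfolded, a common period `P` for their recurrent states, and the `depth` of the formulas that
must not distinguish the unfoldings of `(V1 ∪ V2)`-bisimilar structures. -/
structure Scheme (Atom : Type u) where
  V1 : Set Atom
  V2 : Set Atom
  q : Atom
  mem_V1 : q ∈ V1
  notMem_V2 : q ∉ V2
  size : ℕ
  P : ℕ
  P_pos : 0 < P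
  depth : ℕ

namespace Scheme

variable {Atom : Type u} (p : Scheme Atom)

/-- The number of tags, large enough to encode every pair of states by two of them. -/
def tags : ℕ := 2 * p.size ^ 2

/-- The last position of a probe. The final `p.tags` positions carry the marks, and a formula of
depth `p.depth` cannot see them from the position `p.tags` steps and `p.depth` periods earlier. -/
def len : ℕ := p.tags + p.depth * p.P

/-- The period of loops: a multiple of `i * p.P` for each `0 < i ≤ p.size`. -/
def period : ℕ := p.size.factorial * p.P

theorem period_pos : 0 < p.period := Nat.mul_pos p.size.factorial_pos p.P_pos

end Scheme

/-- An initial structure to be unfolded according to the scheme `p`. Each tag encodes a pair of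
states, its previous and its current state. -/
structure Coded {Atom : Type u} (p : Scheme Atom) extends InitKripke Atom where
  prev : Fin p.tags → State
  cur : Fin p.tags → State
  nontrivial_codes : ∀ s k, {c | prev c = s ∧ cur c = k}.Nontrivial
  card_le : Nat.card State ≤ p.size
  exists_loop : ∀ k, TransGen R k k →
    ∃ v : ℕ → State, v 0 = k ∧ (∀ n, R (v n) (v (n + 1))) ∧ Function.Periodic v p.P

namespace Coded

variable {Atom : Type u} {p : Scheme Atom} (N : Coded p)

/-- The `(V1 ∪ V2)`-bisimilarity class of a state. -/
def cl (s : N.State) : Set (KStruct Atom) := bisimClass (p.V1 ∪ p.V2) ⟨N.toKripke, s⟩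

/-- A closed walk of length `p.period`, presented as a periodic path, whose states repeat up to
`(V1 ∪ V2)`-bisimilarity after `p.P` steps. -/
@[ext]
structure Loop where
  toFun : ℕ → N.State
  rel : ∀ n, N.R (toFun n) (toFun (n + 1))
  periodic : Function.Periodic toFun p.period
  cl_periodic : Function.Periodic (fun n ↦ N.cl (toFun n)) p.P

instance : CoeFun N.Loop fun _ ↦ ℕ → N.State := ⟨Loop.toFun⟩

instance : Finite N.Loop :=
  Finite.of_injective (fun (w : N.Loop) (i : Fin p.period) ↦ w i) fun w w' h ↦ by
    ext n
    rw [← w.periodic.map_mod_nat, ← w'.periodic.map_mod_nat]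
    exact congrFun h ⟨n % p.period, n.mod_lt p.period_pos⟩

/-- The states of the unfolding. A state `k` on no cycle occurs once, as `transient k`. A state on a
cycle occurs as `hub c` for each tag `c` with current state `k`, and as the position `a` of the
`probe` tagged `e` along `w` for each loop `w` with `w a = k`. -/
inductive Node : Type u
  | transient (k : N.State) (hk : ¬ TransGen N.R k k)
  | hub (c : Fin p.tags) (hc : TransGen N.R (N.cur c) (N.cur c))
  | probe (e : Fin p.tags) (w : N.Loop) (a : ℕ) (ha : a ≤ p.len)

variable {N}

namespace Node

/-- The state of which a node is a copy. -/
def proj : N.Node → N.State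
  | transient k _ => k
  | hub c _ => N.cur c
  | probe _ w a _ => w a

/-- The nodes on probes. -/
def IsProbe : N.Node → Prop
  | probe .. => True
  | _ => False

/-- The nodes labelled with `q`: the last `e + 1` nodes of a probe tagged `e`. -/
def Marked : N.Node → Prop
  | probe e _ a _ => p.len ≤ a + e
  | _ => False

instance : Finite N.Node := by
  let f : {k // ¬ TransGen N.R k k} ⊕ {c // TransGen N.R (N.cur c) (N.cur c)} ⊕
      Fin p.tags × N.Loop × Fin (p.len + 1) → N.Node :=
    Sum.elim (fun k ↦ transient k k.2) <| Sum.elim (fun c ↦ hub c c.2) fun x ↦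
      probe x.1 x.2.1 x.2.2 x.2.2.is_le
  refine Finite.of_surjective f fun x ↦ ?_
  cases x with
  | transient k hk => exact ⟨.inl ⟨k, hk⟩, rfl⟩
  | hub c hc => exact ⟨.inr (.inl ⟨c, hc⟩), rfl⟩
  | probe e w a ha => exact ⟨.inr (.inr (e, w, ⟨a, Nat.lt_succ_of_le ha⟩)), rfl⟩

end Node

/-- The transitions of the unfolding. A probe can be left at any position, but a hub then records
the state that was left as its previous state; a probe is entered at position `0`, from a hub with a
different tag. -/
inductive Edge : N.Node → N.Node → Prop
  | transient {x : N.Node} {k : N.State} (hk : ¬ TransGen N.R k k) :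
      N.R x.proj k → Edge x (.transient k hk)
  | hub {x : N.Node} {c : Fin p.tags} (hc : TransGen N.R (N.cur c) (N.cur c)) :
      N.R x.proj (N.cur c) → (x.IsProbe → N.prev c = x.proj) → Edge x (.hub c hc)
  | enter {c e : Fin p.tags} (hc : TransGen N.R (N.cur c) (N.cur c)) (w : N.Loop) :
      c ≠ e → N.R (N.cur c) (w 0) → Edge (.hub c hc) (.probe e w 0 p.len.zero_le)
  | advance (e : Fin p.tags) (w : N.Loop) {a : ℕ} (ha : a + 1 ≤ p.len) :
      Edge (.probe e w a (Nat.le_of_succ_le ha)) (.probe e w (a + 1) ha)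

theorem Edge.rel_proj {x y : N.Node} (h : Edge x y) : N.R x.proj y.proj := by
  cases h with
  | transient hk h => exact h
  | hub hc h _ => exact h
  | enter hc w _ h => exact h
  | advance e w ha => exact w.rel _

theorem Loop.transGen_guarded {C : N.State → Prop} (w : N.Loop) (hC : ∀ n, C (w n)) (m n : ℕ) :
    TransGen (Guarded C N.R) (w m) (w n) := by
  have hle : m + 1 ≤ n + (m + 1) * p.period :=
    (Nat.le_mul_of_pos_right _ p.period_pos).trans (Nat.le_add_left _ _)
  have h := TransGen.head' ⟨hC m, w.rel m⟩
    (reflTransGen_of_path (R := Guarded C N.R) (fun i ↦ ⟨hC i, w.rel i⟩) hle)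
  rwa [show w (n + (m + 1) * p.period) = w n from w.periodic.nat_mul (m + 1) n] at h

theorem Loop.transGen (w : N.Loop) (m n : ℕ) : TransGen N.R (w m) (w n) :=
  TransGen.mono (fun _ _ ↦ And.right) _ _
    (w.transGen_guarded (C := fun _ ↦ True) (fun _ ↦ trivial) m n)

theorem Node.eq_transient {x : N.Node} (hx : ¬ TransGen N.R x.proj x.proj) :
    x = .transient x.proj hx := by
  cases x with
  | transient k hk => rfl
  | hub c hc => exact absurd hc hx
  | probe e w a ha => exact absurd (w.transGen a a) hx

theorem exists_code (s k : N.State) (e : Fin p.tags) : ∃ c, c ≠ e ∧ N.prev c = s ∧ N.cur c = k := by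
  obtain ⟨c, hc, hce⟩ := (N.nontrivial_codes s k).exists_ne e
  exact ⟨c, hce, hc⟩

open Classical in
/-- The copy of the state `k` outside the probes that records `s` as the previous state. -/
noncomputable def far (s k : N.State) : N.Node :=
  if hk : TransGen N.R k k then
    .hub (N.nontrivial_codes s k).nonempty.some
      (by rwa [(N.nontrivial_codes s k).nonempty.some_mem.2])
  else .transient k hk

theorem proj_far (s k : N.State) : (far s k).proj = k := by
  unfold far
  split_ifs with hk
  · exact (N.nontrivial_codes s k).nonempty.some_mem.2
  · rfl

theorem not_isProbe_far (s k : N.State) : ¬ (far s k).IsProbe := by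
  unfold far
  split_ifs <;> exact id

theorem edge_far {x : N.Node} {k : N.State} (h : N.R x.proj k) : Edge x (far x.proj k) := by
  unfold far
  split_ifs with hk
  · have hcode := (N.nontrivial_codes x.proj k).nonempty.some_mem
    exact .hub _ (hcode.2.symm ▸ h) fun _ ↦ hcode.1
  · exact .transient hk h

section Reachability

variable {C : N.State → Prop} {A : N.Node → Prop} {x : N.Node}

theorem exists_transGen_far (hA : ∀ y : N.Node, ¬ y.IsProbe → C y.proj → A y) (hx : A x)
    {k : N.State} (h : TransGen (Guarded C N.R) x.proj k) :
    ∃ s, TransGen (Guarded A Edge) x (far s k) := by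
  induction h with
  | single h => exact ⟨_, .single ⟨hx, edge_far h.2⟩⟩
  | @tail k l _ h ih =>
    obtain ⟨s, hs⟩ := ih
    have hk := proj_far s k
    refine ⟨(far s k).proj, hs.tail ⟨hA _ (not_isProbe_far s k) ?_, edge_far ?_⟩⟩
    · exact hk.symm ▸ h.1
    · exact hk.symm ▸ h.2

theorem transGen_hub (hA : ∀ y : N.Node, ¬ y.IsProbe → C y.proj → A y) (hx : A x)
    {c : Fin p.tags} (hc : TransGen (Guarded C N.R) (N.cur c) (N.cur c))
    (h : TransGen (Guarded C N.R) x.proj (N.cur c)) (hc' : TransGen N.R (N.cur c) (N.cur c)) :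
    TransGen (Guarded A Edge) x (.hub c hc') := by
  obtain ⟨r, hcr, hCr, hr⟩ := TransGen.tail'_iff.1 hc
  obtain ⟨s, hs⟩ := exists_transGen_far hA hx (h.trans_left hcr)
  have hproj := proj_far s r
  have hnot := not_isProbe_far s r
  exact hs.tail ⟨hA _ hnot (hproj.symm ▸ hCr), .hub hc' (hproj.symm ▸ hr) fun h ↦ absurd h hnot⟩

theorem transGen_probe (hA : ∀ y : N.Node, ¬ y.IsProbe → C y.proj → A y) (hx : A x)
    (e : Fin p.tags) {w : N.Loop} (hw : ∀ b, C (w b))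
    (h : TransGen (Guarded C N.R) x.proj (w 0)) {a : ℕ} (ha : a ≤ p.len)
    (hprobe : ∀ b (hb : b < a), A (.probe e w b (hb.le.trans ha))) :
    TransGen (Guarded A Edge) x (.probe e w a ha) := by
  induction a with
  | zero =>
    obtain ⟨m, hm⟩ : ∃ m, p.period = m + 1 := Nat.exists_eq_add_one.2 p.period_pos
    have hstep : N.R (w m) (w 0) := by simpa [← hm, w.periodic.eq] using w.rel m
    obtain ⟨c, hce, -, hc⟩ := N.exists_code (w m) (w m) e
    have hCm : C (N.cur c) := hc ▸ hw m
    have hcycle := w.transGen_guarded hw m m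
    rw [← hc] at hcycle hstep
    have hcc := TransGen.mono (fun _ _ ↦ And.right) _ _ hcycle
    refine (transGen_hub hA hx hcycle ?_ hcc).tail ⟨hA _ id hCm, .enter hcc w hce hstep⟩
    exact hc.symm ▸ h.trans (w.transGen_guarded hw 0 m)
  | succ a ih =>
    exact (ih (Nat.le_of_succ_le ha) fun b hb ↦ hprobe b (hb.trans a.lt_succ_self)).tail
      ⟨hprobe a a.lt_succ_self, .advance e w ha⟩

theorem transGen_of_transGen_proj {y : N.Node} (h : TransGen N.R x.proj y.proj) :
    TransGen Edge x y := by
  have guard {s t : N.State} (h : TransGen N.R s t) : TransGen (Guarded (fun _ ↦ True) N.R) s t :=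
    TransGen.mono (fun _ _ ↦ And.intro trivial) _ _ h
  suffices TransGen (Guarded (fun _ ↦ True) Edge) x y from
    TransGen.mono (fun _ _ ↦ And.right) _ _ this
  cases y with
  | transient k hk =>
    obtain ⟨r, hxr, hr⟩ := TransGen.tail'_iff.1 h
    obtain rfl | hxr := reflTransGen_iff_eq_or_transGen.1 hxr
    · exact .single ⟨trivial, .transient hk hr⟩
    · obtain ⟨s, hs⟩ := exists_transGen_far (fun _ _ _ ↦ trivial) trivial (guard hxr)
      exact hs.tail ⟨trivial, .transient hk ((proj_far s r).symm ▸ hr)⟩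
  | hub c hc => exact transGen_hub (fun _ _ _ ↦ trivial) trivial (guard hc) (guard h) hc
  | probe e w a ha =>
    exact transGen_probe (fun _ _ _ ↦ trivial) trivial e (fun _ ↦ trivial)
      (guard (h.trans (w.transGen a 0))) ha fun _ _ ↦ trivial

theorem reflTransGen_of_reflTransGen_proj {y : N.Node} (h : ReflTransGen N.R x.proj y.proj) :
    ReflTransGen Edge x y := by
  by_cases hx : TransGen N.R x.proj y.proj
  · exact (transGen_of_transGen_proj hx).to_reflTransGen
  · obtain heq | h := reflTransGen_iff_eq_or_transGen.1 h
    · have hxy : x = y := by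
        refine (x.eq_transient (heq ▸ hx)).trans (.trans ?_ (y.eq_transient (heq ▸ hx)).symm)
        simp only [heq]
      exact hxy ▸ .refl
    · exact absurd h hx

end Reachability

variable (N)

/-- The unfolding of the Kripke structure of `N`. -/
def unfolding : Kripke Atom where
  State := N.Node
  stateFinite := inferInstance
  stateNonempty := ⟨far N.s0 N.s0⟩
  R := Edge
  serial x := (N.serial x.proj).elim fun _ h ↦ ⟨_, edge_far h⟩
  L x := N.L x.proj \ p.V1 ∪ {r | r = p.q ∧ x.Marked}

theorem isBoundedMorphism_proj :
    IsBoundedMorphism p.V1 N.unfolding N.toKripke Node.proj where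
  label_eq x := by
    ext r
    have : r = p.q → r ∈ p.V1 := fun h ↦ h ▸ p.mem_V1
    simp only [unfolding, Set.mem_sdiff, Set.mem_union, Set.mem_ofPred_eq]
    tauto
  map_rel := Edge.rel_proj
  exists_lift h := ⟨_, edge_far h, proj_far _ _⟩

/-- The unfolding of `N` as an initial structure. -/
noncomputable def initUnfolding : InitKripke Atom where
  toKripke := N.unfolding
  s0 := far N.s0 N.s0
  initial := exists_surjective_path N.unfolding.serial
    (fun x y ↦ (N.reflTransGen_total x.proj y.proj).imp reflTransGen_of_reflTransGen_proj
      reflTransGen_of_reflTransGen_proj)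
    fun x ↦ reflTransGen_of_reflTransGen_proj <| by
      simpa only [proj_far] using N.reflTransGen_s0 x.proj

theorem vbisim_initUnfolding : VBisim p.V1 N.initUnfolding.toKS N.toKS := by
  have h := N.isBoundedMorphism_proj.vbisim (far N.s0 N.s0)
  rw [proj_far] at h
  exact h

variable {N}

theorem exists_toInitKripke_eq (p : Scheme Atom) (M : InitKripke Atom)
    (hcard : Nat.card M.State ≤ p.size)
    (hloop : ∀ k, TransGen M.R k k →
      ∃ v : ℕ → M.State, v 0 = k ∧ (∀ n, M.R (v n) (v (n + 1))) ∧ Function.Periodic v p.P) :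
    ∃ N : Coded p, N.toInitKripke = M := by
  have := Fintype.ofFinite M.State
  have : Nonempty M.State := M.stateNonempty
  obtain ⟨f⟩ : Nonempty (M.State × M.State × Bool ↪ Fin p.tags) := by
    refine Function.Embedding.nonempty_of_card_le ?_
    rw [Nat.card_eq_fintype_card] at hcard
    rw [Fintype.card_prod, Fintype.card_prod, Fintype.card_bool, Fintype.card_fin, Scheme.tags]
    nlinarith
  have hf (s k : M.State) (b : Bool) : Function.invFun f (f (s, k, b)) = (s, k, b) :=
    Function.leftInverse_invFun f.injective _
  exact ⟨{
    toInitKripke := M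
    prev := fun c ↦ (Function.invFun f c).1
    cur := fun c ↦ (Function.invFun f c).2.1
    nontrivial_codes := fun s k ↦ ⟨f (s, k, true), by simp [hf], f (s, k, false), by simp [hf],
      f.injective.ne (by simp)⟩
    card_le := hcard
    exists_loop := hloop }, rfl⟩

section Transfer

variable {N₁ N₂ : Coded p} {x x' : N₁.Node} {y y' : N₂.Node} {k : ℕ}

/-- Nodes at the same position of two probes with the same tag, along loops with the same
`(V1 ∪ V2)`-bisimilarity classes. -/
inductive SameProbe : N₁.Node → N₂.Node → Prop
  | mk (e : Fin p.tags) {w : N₁.Loop} {w' : N₂.Loop} (h : ∀ b, N₁.cl (w b) = N₂.cl (w' b)) {a : ℕ}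
      (ha : a ≤ p.len) : SameProbe (.probe e w a ha) (.probe e w' a ha)

theorem SameProbe.symm (h : SameProbe x y) : SameProbe y x := by
  cases h with
  | mk e h ha => exact .mk e (fun b ↦ (h b).symm) ha

theorem SameProbe.cl_eq (h : SameProbe x y) : N₁.cl x.proj = N₂.cl y.proj := by
  cases h with
  | mk e h ha => exact h _

theorem SameProbe.exists_edge (h : SameProbe x y) (hx : Edge x x') (hx' : x'.IsProbe) :
    ∃ y', Edge y y' ∧ SameProbe x' y' := by
  cases h with
  | mk e h ha =>
    cases hx with
    | transient => exact hx'.elim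
    | hub => exact hx'.elim
    | advance e w ha => exact ⟨_, .advance e _ ha, .mk e h ha⟩

/-- The marks of the probe containing the node, if any, are more than `k` periods ahead. -/
def Node.Clear (k : ℕ) : N.Node → Prop
  | probe _ _ a _ => a + k * p.P ≤ p.depth * p.P
  | _ => True

theorem Node.clear_probe_iff {e : Fin p.tags} {w : N.Loop} {a : ℕ} {ha : a ≤ p.len} :
    (probe e w a ha).Clear k ↔ a + k * p.P ≤ p.depth * p.P :=
  Iff.rfl

theorem Node.Clear.of_not_isProbe {x : N.Node} (h : ¬ x.IsProbe) : x.Clear k := by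
  cases x with
  | probe => exact absurd trivial h
  | _ => trivial

theorem Node.Clear.of_succ {x : N.Node} (h : x.Clear (k + 1)) : x.Clear k := by
  cases x with
  | probe e w a ha =>
    rw [clear_probe_iff] at h ⊢
    linarith
  | _ => trivial

theorem Node.Clear.of_edge {x y : N.Node} (hk : k ≤ p.depth) (h : x.Clear (k + 1))
    (hxy : Edge x y) : y.Clear k := by
  cases hxy with
  | transient => trivial
  | hub => trivial
  | enter => exact (Nat.zero_add _).trans_le (Nat.mul_le_mul_right _ hk)
  | @advance e w a ha =>
    rw [clear_probe_iff] at h ⊢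
    linarith [p.P_pos]

theorem Node.Clear.not_marked {x : N.Node} (h : x.Clear k) : ¬ x.Marked := by
  cases x with
  | probe e w a ha =>
    rw [clear_probe_iff] at h
    have he := e.2
    unfold Marked Scheme.len
    omega
  | _ => exact id

/-- A condition under which no formula of depth at most `k` over atoms outside `V2` distinguishes
two nodes. -/
def Agree (k : ℕ) (x : N₁.Node) (y : N₂.Node) : Prop :=
  N₁.cl x.proj = N₂.cl y.proj ∧ (SameProbe x y ∨ x.Clear k ∧ y.Clear k)

theorem Agree.symm (h : Agree k x y) : Agree k y x :=
  ⟨h.1.symm, h.2.imp SameProbe.symm And.symm⟩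

theorem Agree.mem_label_iff (h : Agree k x y) {r : Atom} (hr : r ∉ p.V2) :
    r ∈ N₁.unfolding.L x ↔ r ∈ N₂.unfolding.L y := by
  have hmarked : x.Marked ↔ y.Marked := by
    obtain ⟨e, h, ha⟩ | ⟨hx, hy⟩ := h.2
    · exact Iff.rfl
    · exact iff_of_false hx.not_marked hy.not_marked
  have hlabel := Set.ext_iff.1 (bisimClass_eq_iff.1 h.1).label_eq r
  simp only [Set.mem_sdiff, Set.mem_union] at hlabel
  simp only [unfolding, Set.mem_union, Set.mem_sdiff, Set.mem_ofPred_eq, hmarked]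
  tauto

theorem exists_edge_far (hcl : N₁.cl x.proj = N₂.cl y.proj) (hx : Edge x x') :
    ∃ y', Edge y y' ∧ ¬ y'.IsProbe ∧ N₁.cl x'.proj = N₂.cl y'.proj := by
  obtain ⟨l, hl, hcl'⟩ := exists_succ_bisimClass_eq hcl hx.rel_proj
  exact ⟨far y.proj l, edge_far hl, not_isProbe_far _ _, (proj_far y.proj l).symm ▸ hcl'⟩

theorem Agree.exists_edge (hk : k ≤ p.depth) (h : Agree (k + 1) x y) (hx : Edge x x') :
    ∃ y', Edge y y' ∧ Agree k x' y' := by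
  obtain ⟨hcl, hxy⟩ := h
  obtain ⟨y', hy, hy', hcl'⟩ := exists_edge_far hcl hx
  by_cases hx' : x'.IsProbe
  · obtain hxy | ⟨hclear, -⟩ := hxy
    · obtain ⟨z, hyz, hz⟩ := hxy.exists_edge hx hx'
      exact ⟨z, hyz, hz.cl_eq, .inl hz⟩
    · exact ⟨y', hy, hcl', .inr ⟨hclear.of_edge hk hx, .of_not_isProbe hy'⟩⟩
  · exact ⟨y', hy, hcl', .inr ⟨.of_not_isProbe hx', .of_not_isProbe hy'⟩⟩

/- A walk of `N₂` following `w` meets the same state after `i * P` and `j * P` further steps for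
some `i < j ≤ size`; the length `(j - i) * P` of the resulting closed walk divides the period of
loops. -/
theorem Loop.exists_cl_eq (w : N₁.Loop) {n : ℕ} {s : N₂.State} (hs : N₁.cl (w n) = N₂.cl s) :
    ∃ w' : N₂.Loop, (∀ b, N₁.cl (w b) = N₂.cl (w' b)) ∧
      ReflTransGen (Guarded (fun t ↦ ∃ b, N₁.cl (w b) = N₂.cl t) N₂.R) s (w' 0) := by
  obtain ⟨v, rfl, hv, hcl⟩ := exists_path_bisimClass_eq (π := fun i ↦ w (n + i))
    (fun i ↦ w.rel (n + i)) hs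
  obtain ⟨m, hm⟩ := Nat.exists_eq_add_of_le (Nat.le_mul_of_pos_right n p.P_pos)
  obtain ⟨i, j, hij, hj, hvij⟩ := exists_lt_map_eq_of_card_le N₂.card_le fun i ↦ v (m + i * p.P)
  obtain ⟨d, rfl⟩ := Nat.exists_eq_add_of_lt hij
  let u (b : ℕ) : N₂.State := v (m + i * p.P + b)
  let D := (d + 1) * p.P
  have hclosed : u D = u 0 :=
    (congrArg v (show _ = m + (i + d + 1) * p.P by ring)).trans hvij.symm
  have hclu (b : ℕ) : N₁.cl (w b) = N₂.cl (u (b % D)) := calc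
    N₁.cl (w b) = N₁.cl (w (b % D)) := ((w.cl_periodic.nat_mul (d + 1)).map_mod_nat b).symm
    _ = N₁.cl (w (b % D + (n + i) * p.P)) := (w.cl_periodic.nat_mul (n + i) _).symm
    _ = N₁.cl (w (n + (m + i * p.P + b % D))) := by
      rw [add_mul, hm]
      ring_nf
    _ = N₂.cl (u (b % D)) := hcl _
  have hD : D ∣ p.period :=
    Nat.mul_dvd_mul_right (Nat.dvd_factorial d.succ_pos (by omega)) p.P
  refine ⟨⟨fun b ↦ u (b % D), ?_, fun b ↦ ?_, fun b ↦ ?_⟩, hclu, ?_⟩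
  · exact rel_mod_of_closed_walk (Nat.mul_pos d.succ_pos p.P_pos) hclosed fun i _ ↦ hv _
  · simp only [Nat.add_mod, Nat.mod_eq_zero_of_dvd hD, add_zero, Nat.mod_mod]
  · simp only [← hclu]
    exact w.cl_periodic b
  · exact reflTransGen_of_path (fun i ↦ ⟨⟨n + i, hcl i⟩, hv i⟩) (Nat.zero_le _)

/-- The nodes before a node of a probe at which the marks are at most `k + 1` periods ahead satisfy
`A`. For the last node `x` with `x.Clear k` these nodes and `x` span a period. -/
def Node.Trail (k : ℕ) (A : N.Node → Prop) : N.Node → Prop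
  | probe e w a ha => ∀ b (hb : b < a), ¬ (probe e w b (hb.le.trans ha)).Clear (k + 1) →
      A (.probe e w b (hb.le.trans ha))
  | _ => True

/-- The invariant relating a node `x` on a path through `A` to the node `y` reached by the path that
imitates it. While `x` is clear, `y` is clear too and need not be on a probe. -/
def Follows (k : ℕ) (A : N₁.Node → Prop) (x : N₁.Node) (y : N₂.Node) : Prop :=
  N₁.cl x.proj = N₂.cl y.proj ∧ (SameProbe x y ∨ x.Clear k ∧ y.Clear k ∧ x.Trail k A)

variable {A : N₁.Node → Prop} {B : N₂.Node → Prop}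

theorem Follows.agree (h : Follows k A x y) : Agree k x y :=
  ⟨h.1, h.2.imp_right fun h ↦ ⟨h.1, h.2.1⟩⟩

theorem SameProbe.follows (h : SameProbe x y) : Follows k A x y :=
  ⟨h.cl_eq, .inl h⟩

theorem Agree.follows (h : Agree (k + 1) x y) : Follows k A x y := by
  refine ⟨h.1, h.2.imp_right fun ⟨hx, hy⟩ ↦ ⟨hx.of_succ, hy.of_succ, ?_⟩⟩
  cases x with
  | probe e w a ha =>
    exact fun b hb hclear ↦ absurd ((Nat.add_le_add_right hb.le _).trans hx) hclear
  | _ => trivial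

theorem Follows.exists_transGen_probe (hk : k + 1 ≤ p.depth)
    (hAB : ∀ x y, A x → Agree k x y → B y) {e : Fin p.tags} {w : N₁.Loop} {a : ℕ}
    (ha : a + 1 ≤ p.len) (haP : a + k * p.P = p.depth * p.P)
    (h : Follows k A (.probe e w a (Nat.le_of_succ_le ha)) y)
    (hA : A (.probe e w a (Nat.le_of_succ_le ha)))
    (htrail : (Node.probe e w a (Nat.le_of_succ_le ha)).Trail k A) :
    ∃ y', TransGen (Guarded B Edge) y y' ∧ SameProbe (.probe e w (a + 1) ha) y' := by
  have hB (z : N₂.Node) (hz : z.Clear k) (hcl : ∃ b, N₁.cl (w b) = N₂.cl z.proj) : B z := by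
    obtain ⟨b, hb⟩ := hcl
    have hPa : p.P ≤ a + 1 := by linarith [Nat.mul_le_mul_right p.P hk]
    obtain ⟨b', hle, hlt, hmod⟩ := exists_mod_eq_of_le p.P_pos hPa b
    have hb' : N₁.cl (w b') = N₁.cl (w b) := by
      rw [← w.cl_periodic.map_mod_nat b', hmod]
      exact w.cl_periodic.map_mod_nat b
    refine hAB (.probe e w b' (by omega)) z ?_ ⟨hb'.trans hb, .inr ⟨?_, hz⟩⟩
    · obtain rfl | hlt' := hle.eq_or_lt
      · exact hA
      · refine htrail b' hlt' fun hclear ↦ ?_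
        rw [Node.clear_probe_iff] at hclear
        linarith
    · exact (Nat.add_le_add_right hle _).trans haP.le
  obtain ⟨w', hcl, hreach⟩ := w.exists_cl_eq h.1
  have hC (b : ℕ) : ∃ b', N₁.cl (w b') = N₂.cl (w' b) := ⟨b, hcl b⟩
  refine ⟨.probe e w' (a + 1) ha, ?_, .mk e hcl ha⟩
  refine transGen_probe (fun z hz ↦ hB z (.of_not_isProbe hz)) ?_ e hC
    (TransGen.trans_right hreach (w'.transGen_guarded hC 0 0)) ha fun b hb ↦ ?_
  · exact hAB _ _ hA h.agree
  · exact hB _ ((Nat.add_le_add_right (Nat.le_of_lt_succ hb) _).trans haP.le) (hC b)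

theorem isWeakSimulation_follows (hk : k + 1 ≤ p.depth) (hAB : ∀ x y, A x → Agree k x y → B y) :
    IsWeakSimulation (Follows k A) (Guarded A Edge) (Guarded B Edge) := by
  rintro x y x' h ⟨hA, hx⟩
  have hB : B y := hAB x y hA h.agree
  obtain ⟨y', hy, hy', hcl⟩ := exists_edge_far h.1 hx
  have far_step (hclear : x'.Clear k) (htrail : x'.Trail k A) :
      ∃ y', TransGen (Guarded B Edge) y y' ∧ Follows k A x' y' :=
    ⟨y', .single ⟨hB, hy⟩, hcl, .inr ⟨hclear, .of_not_isProbe hy', htrail⟩⟩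
  cases hx with
  | transient => exact far_step trivial trivial
  | hub => exact far_step trivial trivial
  | enter =>
    exact far_step (Node.clear_probe_iff.2 ((Nat.zero_add _).trans_le
      (Nat.mul_le_mul_right _ (Nat.le_of_succ_le hk)))) fun b hb ↦ absurd hb b.not_lt_zero
  | @advance e w a ha =>
    obtain hsame | ⟨hclear, -, htrail⟩ := h.2
    · obtain ⟨z, hyz, hz⟩ := hsame.exists_edge (.advance e w ha) trivial
      exact ⟨z, .single ⟨hB, hyz⟩, hz.follows⟩
    · by_cases hclear' : (Node.probe e w (a + 1) ha).Clear k
      · refine far_step hclear' fun b hb hb' ↦ ?_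
        obtain rfl | hb := (Nat.le_of_lt_succ hb).eq_or_lt
        · exact hA
        · exact htrail b hb hb'
      · rw [Node.clear_probe_iff] at hclear hclear'
        obtain ⟨z, hyz, hz⟩ := h.exists_transGen_probe hk hAB ha (by omega) hA htrail
        exact ⟨z, hyz, hz.follows⟩

theorem Agree.sat {φ : CTL Atom} (hφ : φ.vars ∩ p.V2 = ∅) (hdepth : φ.depth ≤ k)
    (hk : k ≤ p.depth) (h : Agree k x y) (hx : Sat N₁.unfolding φ x) : Sat N₂.unfolding φ y := by
  induction φ generalizing N₁ N₂ k with
  | bot => exact hx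
  | top => trivial
  | atom r => exact (h.mem_label_iff (by simpa [CTL.vars] using hφ)).1 hx
  | neg φ ih => exact fun hy ↦ hx (ih hφ hdepth hk h.symm hy)
  | or φ ψ ihφ ihψ =>
    rw [CTL.vars, Set.union_inter_distrib_right, Set.union_empty_iff] at hφ
    exact hx.imp (ihφ hφ.1 (le_of_max_le_left hdepth) hk h)
      (ihψ hφ.2 (le_of_max_le_right hdepth) hk h)
  | EX φ ih =>
    obtain ⟨k, rfl⟩ := Nat.exists_eq_add_of_le' ((Nat.le_add_left 1 _).trans hdepth)
    obtain ⟨x', hxx', hx'⟩ := hx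
    obtain ⟨y', hyy', h'⟩ := h.exists_edge (Nat.le_of_succ_le hk) hxx'
    exact ⟨y', hyy', ih hφ (Nat.le_of_succ_le_succ hdepth) (Nat.le_of_succ_le hk) h' hx'⟩
  | EG φ ih =>
    obtain ⟨k, rfl⟩ := Nat.exists_eq_add_of_le' ((Nat.le_add_left 1 _).trans hdepth)
    obtain ⟨π, rfl, hπ⟩ := sat_EG_iff.1 hx
    refine sat_EG_iff.2 ((isWeakSimulation_follows hk fun x y hx h ↦ ?_).exists_path h.follows hπ)
    exact ih hφ (Nat.le_of_succ_le_succ hdepth) (Nat.le_of_succ_le hk) h hx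
  | EU φ ψ ihφ ihψ =>
    obtain ⟨k, rfl⟩ := Nat.exists_eq_add_of_le' ((Nat.le_add_left 1 _).trans hdepth)
    rw [CTL.vars, Set.union_inter_distrib_right, Set.union_empty_iff] at hφ
    have hdepth := Nat.le_of_succ_le_succ hdepth
    obtain ⟨x', hx', hπ⟩ := sat_EU_iff.1 hx
    obtain ⟨y', hyy', h'⟩ := (isWeakSimulation_follows hk fun x y hx h ↦
      ihφ hφ.1 (le_of_max_le_left hdepth) (Nat.le_of_succ_le hk) h hx).exists_reflTransGen
        h.follows hπ
    have hy' := ihψ hφ.2 (le_of_max_le_right hdepth) (Nat.le_of_succ_le hk) h'.agree hx'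
    exact sat_EU_iff.2 ⟨y', hy', hyy'⟩

theorem agree_far {s : N₁.State} {t : N₂.State} (h : N₁.cl s = N₂.cl t) :
    Agree k (far s s) (far t t) :=
  ⟨by rwa [proj_far, proj_far], .inr ⟨.of_not_isProbe (not_isProbe_far s s),
    .of_not_isProbe (not_isProbe_far t t)⟩⟩

end Transfer

section Rigidity

variable {x y z : N.Node}

/-- `V2`-bisimilarity of nodes of the unfolding. -/
def Node.Bisim (x y : N.Node) : Prop := VBisim p.V2 ⟨N.unfolding, x⟩ ⟨N.unfolding, y⟩

namespace Node.Bisim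

theorem refl (x : N.Node) : x.Bisim x := VBisim.refl _ _

theorem symm (h : x.Bisim y) : y.Bisim x := VBisim.symm h

theorem trans (h : x.Bisim y) (h' : y.Bisim z) : x.Bisim z := VBisim.trans h h'

theorem exists_edge (h : x.Bisim y) (hxz : Edge x z) : ∃ z', Edge y z' ∧ z.Bisim z' :=
  VBisim.exists_succ (M := N.unfolding) (N := N.unfolding) h hxz

theorem marked_iff (h : x.Bisim y) : x.Marked ↔ y.Marked := by
  have := Set.ext_iff.1 (VBisim.label_eq (M := N.unfolding) (N := N.unfolding) h) p.q
  simpa [unfolding, p.mem_V1, p.notMem_V2] using this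

end Node.Bisim

theorem Node.Marked.isProbe (h : x.Marked) : x.IsProbe := by
  cases x with
  | probe => trivial
  | _ => exact h

theorem Edge.eq_advance {e : Fin p.tags} {w : N.Loop} {a : ℕ} {ha : a ≤ p.len}
    (h : Edge (.probe e w a ha) y) (hy : y.IsProbe) : ∃ ha', y = .probe e w (a + 1) ha' := by
  cases h with
  | transient => exact hy.elim
  | hub => exact hy.elim
  | advance e w ha' => exact ⟨ha', rfl⟩

theorem Edge.eq_probe {e : Fin p.tags} {w : N.Loop} {a : ℕ} {ha : a + 1 ≤ p.len}
    (h : Edge x (.probe e w (a + 1) ha)) : x = .probe e w a (Nat.le_of_succ_le ha) := by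
  cases h with
  | advance => rfl

theorem Edge.eq_hub {e : Fin p.tags} {w : N.Loop} {h0 : 0 ≤ p.len}
    (h : Edge x (.probe e w 0 h0)) : ∃ c hc, c ≠ e ∧ x = .hub c hc := by
  cases h with
  | enter hc _ hce => exact ⟨_, hc, hce, rfl⟩

theorem Node.Bisim.eq_probe {e : Fin p.tags} {w : N.Loop} {a : ℕ} {ha : a ≤ p.len}
    (h : (Node.probe e w a ha).Bisim y) : ∃ e' w', y = .probe e' w' a ha := by
  induction ha using Nat.decreasingInduction generalizing y with
  | self =>
    have hmarked : y.Marked := h.marked_iff.1 (Nat.le_add_right _ _)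
    cases y with
    | probe e' w' a' ha' =>
      obtain rfl | hlt := ha'.eq_or_lt
      · exact ⟨e', w', rfl⟩
      · obtain ⟨z, hz, hbisim⟩ := h.symm.exists_edge (.advance e' w' hlt)
        have hmarked' : (probe e' w' (a' + 1) hlt).Marked :=
          hmarked.trans (Nat.add_le_add_right a'.le_succ _)
        obtain ⟨ha'', -⟩ := hz.eq_advance (hbisim.marked_iff.1 hmarked').isProbe
        exact absurd ha'' (Nat.not_succ_le_self _)
    | _ => exact hmarked.elim
  | of_succ a ha ih =>
    obtain ⟨z, hz, hbisim⟩ := h.exists_edge (.advance e w ha)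
    obtain ⟨e', w', rfl⟩ := ih hbisim
    exact ⟨e', w', hz.eq_probe⟩

theorem Node.Bisim.advance {e e' : Fin p.tags} {w w' : N.Loop}
    (h : (Node.probe e w 0 p.len.zero_le).Bisim (.probe e' w' 0 p.len.zero_le)) {a : ℕ}
    (ha : a ≤ p.len) : (Node.probe e w a ha).Bisim (.probe e' w' a ha) := by
  induction a with
  | zero => exact h
  | succ a ih =>
    obtain ⟨z, hz, hbisim⟩ := (ih (Nat.le_of_succ_le ha)).exists_edge (.advance e w ha)
    obtain ⟨e'', w'', rfl⟩ := hbisim.eq_probe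
    obtain ⟨_, heq⟩ := hz.eq_advance trivial
    exact heq ▸ hbisim

theorem Node.Bisim.tag_le {e e' : Fin p.tags} {w w' : N.Loop}
    (h : (Node.probe e w 0 p.len.zero_le).Bisim (.probe e' w' 0 p.len.zero_le)) : e ≤ e' := by
  have he : e ≤ p.len := e.2.le.trans (Nat.le_add_right _ _)
  have hmarked := (h.advance (p.len.sub_le e)).marked_iff.1 (Nat.sub_add_cancel he).ge
  have : p.len ≤ p.len - e + e' := hmarked
  omega

theorem exists_edge_probe {c e : Fin p.tags} (hc : TransGen N.R (N.cur c) (N.cur c))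
    (hce : c ≠ e) : ∃ w, Edge (.hub c hc) (.probe e w 0 p.len.zero_le) := by
  obtain ⟨v, h0, hv, hper⟩ := N.exists_loop _ hc
  have hper' : Function.Periodic (fun n ↦ v (n + 1)) p.P := hper.add_const 1
  exact ⟨⟨fun n ↦ v (n + 1), fun n ↦ hv (n + 1), hper'.nat_mul _, hper'.comp N.cl⟩,
    .enter hc _ hce (h0 ▸ hv 0)⟩

/- A hub is identified by the tag of the probes that cannot be entered from it. -/
theorem Node.Bisim.eq_hub {c : Fin p.tags} {hc : TransGen N.R (N.cur c) (N.cur c)}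
    (h : (Node.hub c hc).Bisim y) : y = .hub c hc := by
  have exists_ne {e : Fin p.tags} (hce : c ≠ e) : ∃ c' hc', c' ≠ e ∧ y = .hub c' hc' := by
    obtain ⟨w, hw⟩ := exists_edge_probe hc hce
    obtain ⟨z, hz, hbisim⟩ := h.exists_edge hw
    obtain ⟨e', w', rfl⟩ := hbisim.eq_probe
    rw [hbisim.tag_le.antisymm hbisim.symm.tag_le]
    exact hz.eq_hub
  obtain ⟨e, hec, -⟩ := N.exists_code N.s0 N.s0 c
  obtain ⟨c', hc', -, rfl⟩ := exists_ne hec.symm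
  obtain rfl | hne := eq_or_ne c c'
  · rfl
  · obtain ⟨c'', _, hc'', heq⟩ := exists_ne hne
    cases heq
    exact absurd rfl hc''

theorem Node.Bisim.proj_eq_of_probe {e : Fin p.tags} {w : N.Loop} {a : ℕ} {ha : a ≤ p.len}
    (h : (Node.probe e w a ha).Bisim y) : w a = y.proj := by
  obtain ⟨e', w', rfl⟩ := h.eq_probe
  obtain ⟨c, -, hprev, hcur⟩ := N.exists_code (w a) (w (a + 1)) e
  have hc : TransGen N.R (N.cur c) (N.cur c) := hcur.symm ▸ w.transGen _ _
  obtain ⟨z, hz, hbisim⟩ := h.exists_edge (.hub hc (hcur.symm ▸ w.rel a) fun _ ↦ hprev)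
  obtain rfl := hbisim.eq_hub
  cases hz with
  | hub _ _ hprev' => exact hprev.symm.trans (hprev' trivial)

theorem Node.Bisim.transGen_proj (h : x.Bisim y) (hx : TransGen N.R x.proj x.proj) :
    TransGen N.R y.proj y.proj := by
  cases x with
  | transient k hk => exact absurd hx hk
  | hub c hc => exact h.eq_hub ▸ hc
  | probe e w a ha => exact h.proj_eq_of_probe ▸ w.transGen a a

theorem isWeakSimulation_bisim :
    IsWeakSimulation (Node.Bisim (N := N)) Edge Edge := fun _ _ _ h hx ↦
  (h.exists_edge hx).imp fun _ ↦ And.imp_left .single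

/- Otherwise the walk from `x` to `y` could be continued forever through nodes bisimilar to `x`, and
would run into a cycle. -/
theorem Node.Bisim.not_transGen (h : x.Bisim y) (hx : ¬ TransGen N.R x.proj x.proj) :
    ¬ TransGen Edge x y := by
  intro hxy
  obtain ⟨z, ⟨hxz, -⟩, hz⟩ := exists_transGen_self (R := Edge)
    (X := {z | x.Bisim z ∧ ∃ z', z.Bisim z' ∧ TransGen Edge z z'}) ⟨x, .refl x, y, h, hxy⟩ (by
      rintro z ⟨hxz, z', hzz', hz⟩
      obtain ⟨z'', hz', hzz''⟩ := isWeakSimulation_bisim.exists_transGen hzz' hz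
      exact ⟨z', ⟨hxz.trans hzz', z'', hzz'', hz'⟩, hz⟩)
  exact hx (hxz.symm.transGen_proj (hz.lift Node.proj fun _ _ ↦ Edge.rel_proj))

theorem Node.Bisim.proj_eq (h : x.Bisim y) : x.proj = y.proj := by
  by_cases hx : TransGen N.R x.proj x.proj
  · cases x with
    | transient k hk => exact absurd hx hk
    | hub c hc => rw [h.eq_hub]
    | probe e w a ha => exact h.proj_eq_of_probe
  · have hy : ¬ TransGen N.R y.proj y.proj := fun hy ↦ hx (h.symm.transGen_proj hy)
    obtain hxy | hyx := N.reflTransGen_total x.proj y.proj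
    · exact ((reflTransGen_iff_eq_or_transGen.1 hxy).resolve_right fun hxy ↦
        h.not_transGen hx (transGen_of_transGen_proj hxy)).symm
    · exact (reflTransGen_iff_eq_or_transGen.1 hyx).resolve_right fun hyx ↦
        h.symm.not_transGen hy (transGen_of_transGen_proj hyx)

end Rigidity

end Coded

section Amalgamation

variable {Atom : Type u} {V1 V2 : Set Atom}

/-- The initial structure `K` with the labeling `L`. -/
def InitKripke.withLabel (K : InitKripke Atom) (L : K.State → Set Atom) : InitKripke Atom :=
  { K with L := L }

theorem InitKripke.vbisim_withLabel {K : InitKripke Atom} {L : K.State → Set Atom}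
    (hL : ∀ s, K.L s \ V1 = L s \ V1) : VBisim V1 K.toKS (K.withLabel L).toKS :=
  have hid : IsBoundedMorphism V1 K.toKripke (K.withLabel L).toKripke id :=
    ⟨hL, id, fun h ↦ ⟨_, h, rfl⟩⟩
  hid.vbisim K.s0

theorem IsBoundedMorphism.exists_amalgam {H N : Kripke Atom} {f : H.State → N.State}
    (hf : IsBoundedMorphism V1 H N f)
    (hrigid : ∀ {x y}, VBisim V2 ⟨H, x⟩ ⟨H, y⟩ → f x = f y) {K : InitKripke Atom} {x : H.State}
    (hx : VBisim V2 K.toKS ⟨H, x⟩) :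
    ∃ K' : InitKripke Atom, VBisim V1 K.toKS K'.toKS ∧ VBisim V2 K'.toKS ⟨N, f x⟩ := by
  let L (s : K.State) : Set Atom := K.L s \ V1 ∪
    {r | r ∈ V1 ∧ ∃ x, VBisim V2 ⟨K.toKripke, s⟩ ⟨H, x⟩ ∧ r ∈ N.L (f x)}
  have hL {s : K.State} {x : H.State} (hx : VBisim V2 ⟨K.toKripke, s⟩ ⟨H, x⟩) :
      L s \ V2 = N.L (f x) \ V2 := by
    ext r
    have hV2 := Set.ext_iff.1 hx.label_eq r
    have hV1 := Set.ext_iff.1 (hf.label_eq x) r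
    have hmem : (∃ y, VBisim V2 ⟨K.toKripke, s⟩ ⟨H, y⟩ ∧ r ∈ N.L (f y)) ↔ r ∈ N.L (f x) :=
      ⟨fun ⟨y, hy, hr⟩ ↦ hrigid (hx.symm.trans hy) ▸ hr, fun hr ↦ ⟨x, hx, hr⟩⟩
    simp only [Set.mem_sdiff] at hV1 hV2
    simp only [L, Set.mem_sdiff, Set.mem_union, Set.mem_ofPred_eq, hmem]
    tauto
  refine ⟨K.withLabel L, InitKripke.vbisim_withLabel fun s ↦ ?_, ?_⟩
  · ext r
    simp only [L, Set.mem_sdiff, Set.mem_union, Set.mem_ofPred_eq]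
    tauto
  · refine VBisim.of_bisimulation (M := (K.withLabel L).toKripke) (N := N)
      (fun s k ↦ ∃ x, VBisim V2 ⟨K.toKripke, s⟩ ⟨H, x⟩ ∧ f x = k) ?_ ?_ ?_ ⟨x, hx, rfl⟩
    · rintro s _ ⟨x, hx, rfl⟩
      exact hL hx
    · rintro s _ s' ⟨x, hx, rfl⟩ hs
      obtain ⟨x', hxx', hx'⟩ := hx.exists_succ (M := K.toKripke) hs
      exact ⟨f x', hf.map_rel hxx', x', hx', rfl⟩
    · rintro s _ k ⟨x, hx, rfl⟩ hk
      obtain ⟨x', hxx', rfl⟩ := hf.exists_lift hk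
      obtain ⟨s', hss', hs'⟩ := hx.symm.exists_succ hxx'
      exact ⟨s', hss', x', hs'.symm, rfl⟩

end Amalgamation

section Forgetting

variable {Atom : Type u} {V1 V2 : Set Atom} {φ ψ ψ1 ψ2 : CTL Atom}

theorem exists_scheme {q : Atom} (hq1 : q ∈ V1) (hq2 : q ∉ V2) (d : ℕ) (M N : InitKripke Atom) :
    ∃ p : Scheme Atom, p.V1 = V1 ∧ p.V2 = V2 ∧ p.depth = d ∧
      (∃ C : Coded p, C.toInitKripke = M) ∧ ∃ C : Coded p, C.toInitKripke = N := by
  obtain ⟨P, hP, hM⟩ := exists_common_period M.R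
  obtain ⟨Q, hQ, hN⟩ := exists_common_period N.R
  refine ⟨⟨V1, V2, q, hq1, hq2, max (Nat.card M.State) (Nat.card N.State), P * Q,
    Nat.mul_pos hP hQ, d⟩, rfl, rfl, rfl, Coded.exists_toInitKripke_eq _ M (le_max_left _ _) ?_,
    Coded.exists_toInitKripke_eq _ N (le_max_right _ _) ?_⟩
  · intro k hk
    obtain ⟨v, h0, hv, hper⟩ := hM k hk
    exact ⟨v, h0, hv, by simpa [mul_comm] using hper.nat_mul Q⟩
  · intro k hk
    obtain ⟨v, h0, hv, hper⟩ := hN k hk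
    exact ⟨v, h0, hv, hper.nat_mul P⟩

theorem IsForget.mem_of_vbisim {V : Set Atom} (h : IsForget φ V ψ) {K K' : InitKripke Atom}
    (hK : K ∈ CTLMod φ) (hKK' : VBisim V K.toKS K'.toKS) : K' ∈ CTLMod ψ :=
  h.2.symm.subset ⟨K, hK, hKK'⟩

theorem IsForget.exists_vbisim {V : Set Atom} (h : IsForget φ V ψ) {K : InitKripke Atom}
    (hK : K ∈ CTLMod ψ) : ∃ K' ∈ CTLMod φ, VBisim V K'.toKS K.toKS :=
  h.2.subset hK

theorem IsForget.mem_of_vbisim_union (h1 : IsForget φ V1 ψ1) (h2 : IsForget ψ1 V2 ψ2)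
    {T K : InitKripke Atom} (hT : T ∈ CTLMod φ) (hTK : VBisim (V1 ∪ V2) T.toKS K.toKS) :
    K ∈ CTLMod ψ2 := by
  by_cases hsub : V1 ⊆ V2
  · rw [Set.union_eq_self_of_subset_left hsub] at hTK
    exact h2.mem_of_vbisim (h1.mem_of_vbisim hT (.refl _ _)) hTK
  obtain ⟨q, hq1, hq2⟩ := Set.not_subset.1 hsub
  obtain ⟨p, rfl, rfl, hdepth, ⟨T, rfl⟩, ⟨N, rfl⟩⟩ := exists_scheme hq1 hq2 ψ2.depth T K
  have hT' : T.initUnfolding ∈ CTLMod ψ2 :=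
    h2.mem_of_vbisim (h1.mem_of_vbisim hT T.vbisim_initUnfolding.symm) (.refl _ _)
  have hN' : N.initUnfolding ∈ CTLMod ψ2 :=
    (Coded.agree_far (bisimClass_eq_iff.2 hTK)).sat h2.1 hdepth.ge le_rfl hT'
  obtain ⟨K, hK, hKN⟩ := h2.exists_vbisim hN'
  obtain ⟨K', hKK', hK'⟩ :=
    N.isBoundedMorphism_proj.exists_amalgam (x := Coded.far N.s0 N.s0) Coded.Node.Bisim.proj_eq hKN
  obtain ⟨K₀, hK₀, hK₀K⟩ := h1.exists_vbisim hK
  rw [Coded.proj_far] at hK'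
  exact h2.mem_of_vbisim (h1.mem_of_vbisim hK₀ (hK₀K.trans hKK')) hK'

theorem forget_commutativity_general (h1 : IsForget φ V1 ψ1) (h2 : IsForget ψ1 V2 ψ2) :
    CTLMod ψ2 = {K | ∃ K' ∈ CTLMod φ, VBisim (V1 ∪ V2) K'.toKS K.toKS} := by
  ext K
  constructor
  · intro hK
    obtain ⟨K', hK', hb⟩ := h2.exists_vbisim hK
    obtain ⟨T, hT, hTK'⟩ := h1.exists_vbisim hK'
    exact ⟨T, hT, (hTK'.mono Set.subset_union_left).trans (hb.mono Set.subset_union_right)⟩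
  · rintro ⟨T, hT, hTK⟩
    exact h1.mem_of_vbisim_union h2 hT hTK

end Forgetting

/-- Commutativity: forgetting `V_1 ∪ V_2` equals forgetting `V_1` first and
then `V_2`. -/
theorem forget_commutativity {Atom : Type u} [Finite Atom] (φ : CTL Atom)
    (V1 V2 : Set Atom) (ψ1 ψ2 ψ : CTL Atom)
    (h1 : IsForget φ V1 ψ1) (h2 : IsForget ψ1 V2 ψ2)
    (h : IsForget φ (V1 ∪ V2) ψ) :
    CTLEquiv ψ ψ2 :=
  h.2.trans (forget_commutativity_general h1 h2).symm
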